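/- arXiv:1708.05573 — 8 statements merged into one kernel-verified Lean document; each statement's English description precedes it below -/
import Mathlib

section
/- Let Z, Z' ∈ {0,1}^{n×K} be cluster membership matrices with clustering matrices C = ZZ^T and C' = Z'Z'^T. Then δ̃(C, C') ≤ 4 δ(Z, Z'). -/
open Matrix BigOperators

/-- A cluster membership matrix: entries in {0,1}, every row has exactly one entry equal to 1. -/
def IsClusterMembership {n K : ℕ} (Z : Matrix (Fin n) (Fin K) ℝ) : Prop :=
  (∀ i k, Z i k = 0 ∨ Z i k = 1) ∧ ∀ i, ∃! k, Z i k = 1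

/-- The permutation matrix associated to a permutation of `Fin K`. -/
def permMat {K : ℕ} (q : Equiv.Perm (Fin K)) : Matrix (Fin K) (Fin K) ℝ :=
  Matrix.of fun i j => if q i = j then 1 else 0

/-- The entrywise ℓ0 "norm": the number of nonzero entries of a matrix. -/
noncomputable def zeroNorm {n K : ℕ} (A : Matrix (Fin n) (Fin K) ℝ) : ℕ :=
  (Finset.univ.filter fun p : Fin n × Fin K => A p.1 p.2 ≠ 0).card

/-- δ(Z,Z') = (1/n) · min over K×K permutation matrices Q of ‖ZQ − Z'‖₀. -/
noncomputable def deltaZ {n K : ℕ} (Z Z' : Matrix (Fin n) (Fin K) ℝ) : ℝ :=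
  (1 / (n : ℝ)) * (Finset.univ.inf' ⟨1, Finset.mem_univ 1⟩
    fun q : Equiv.Perm (Fin K) => ((zeroNorm (Z * permMat q - Z') : ℕ) : ℝ))

/-- δ̃(C,C') = (1/n²) ‖C − C'‖_F². -/
noncomputable def deltaTilde {n : ℕ} (C C' : Matrix (Fin n) (Fin n) ℝ) : ℝ :=
  (1 / ((n : ℝ))^2) * ∑ i, ∑ j, (C i j - C' i j)^2

/-!
The rows of `Z` and `Z'` are probability vectors, so the entries of `ZZᵀ` and `Z'Z'ᵀ` lie in
`[0, 1]`, and they agree at `(i, j)` unless the rows of `Z` and `Z'` differ at `i` or at `j`. Hence,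
if `m` rows differ, the squared Frobenius distance is at most `2nm`. Two distinct vectors with the
same sum differ in at least two coordinates, so `2m ≤ ‖Z - Z'‖₀`. Finally, replacing `Z` by `ZQ`
leaves `ZZᵀ` unchanged. This even gives the constant `1` in place of `4`.
-/

theorem one_lt_card_ne_zero_of_sum_eq_zero {ι M : Type*} [Fintype ι] [AddCommMonoid M]
    [DecidableEq M] {v : ι → M} (hv : v ≠ 0) (hsum : ∑ k, v k = 0) :
    1 < (Finset.univ.filter fun k => v k ≠ 0).card := by
  obtain ⟨k, hk⟩ := Function.ne_iff.mp hv
  obtain ⟨l, hlk, hl⟩ : ∃ l, l ≠ k ∧ v l ≠ 0 := by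
    by_contra! h
    exact hk ((Fintype.sum_eq_single k h).symm.trans hsum)
  exact Finset.one_lt_card.mpr ⟨k, by simpa using hk, l, by simpa using hl, hlk.symm⟩

theorem sum_sum_le_two_mul_card_mul_card {ι R : Type*} [Fintype ι] [CommSemiring R]
    [PartialOrder R] [IsOrderedRing R] {F : ι → ι → R} (s : Finset ι) (hF : ∀ i j, F i j ≤ 1)
    (hs : ∀ i ∉ s, ∀ j ∉ s, F i j ≤ 0) :
    ∑ i, ∑ j, F i j ≤ 2 * Fintype.card ι * s.card := by
  classical
  calc
    ∑ i, ∑ j, F i j ≤ ∑ i, ∑ j, ((if i ∈ s then 1 else 0) + if j ∈ s then 1 else 0) := by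
      refine Finset.sum_le_sum fun i _ => Finset.sum_le_sum fun j _ => ?_
      by_cases hi : i ∈ s
      · rw [if_pos hi]
        exact (hF i j).trans (le_add_of_nonneg_right (by split_ifs <;> simp))
      by_cases hj : j ∈ s
      · simpa [hi, hj] using hF i j
      · simpa [hi, hj] using hs i hi j hj
    _ = 2 * Fintype.card ι * s.card := by
      simp only [Finset.sum_add_distrib, Finset.sum_const, Finset.card_univ, nsmul_eq_mul,
        ← Finset.mul_sum, Finset.sum_boole, Finset.filter_univ_mem]
      ring

theorem dotProduct_mem_Icc_of_mem_stdSimplex {ι R : Type*} [Fintype ι] [Semiring R]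
    [PartialOrder R] [IsOrderedRing R] {p q : ι → R} (hp : p ∈ stdSimplex R ι)
    (hq : q ∈ stdSimplex R ι) : p ⬝ᵥ q ∈ Set.Icc 0 1 := by
  refine ⟨Finset.sum_nonneg fun k _ => mul_nonneg (hp.1 k) (hq.1 k), ?_⟩
  calc
    p ⬝ᵥ q ≤ ∑ k, p k := Finset.sum_le_sum fun k _ =>
      mul_le_of_le_one_right (hp.1 k) (mem_Icc_of_mem_stdSimplex hq k).2
    _ = 1 := hp.2

section

variable {n K : ℕ}

theorem IsClusterMembership.mem_stdSimplex {Z : Matrix (Fin n) (Fin K) ℝ}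
    (hZ : IsClusterMembership Z) (i : Fin n) : Z i ∈ stdSimplex ℝ (Fin K) := by
  obtain ⟨k, hk, huniq⟩ := hZ.2 i
  refine ⟨fun l => ?_, ?_⟩
  · rcases hZ.1 i l with h | h <;> simp [h]
  · have hzero (l : Fin K) (hl : l ≠ k) : Z i l = 0 :=
      (hZ.1 i l).resolve_right fun h => hl (huniq l h)
    exact (Fintype.sum_eq_single k hzero).trans hk

theorem mul_permMat (Z : Matrix (Fin n) (Fin K) ℝ) (q : Equiv.Perm (Fin K)) :
    Z * permMat q = Z.submatrix id q.symm := by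
  ext i k
  simp [Matrix.mul_apply, permMat, ← Equiv.eq_symm_apply]

theorem mul_permMat_mem_stdSimplex {Z : Matrix (Fin n) (Fin K) ℝ} {i : Fin n}
    (hZ : Z i ∈ stdSimplex ℝ (Fin K)) (q : Equiv.Perm (Fin K)) :
    (Z * permMat q) i ∈ stdSimplex ℝ (Fin K) := by
  rw [mul_permMat]
  exact ⟨fun k => hZ.1 (q.symm k), (Equiv.sum_comp q.symm (Z i)).trans hZ.2⟩

theorem mul_permMat_mul_transpose (Z : Matrix (Fin n) (Fin K) ℝ) (q : Equiv.Perm (Fin K)) :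
    Z * permMat q * (Z * permMat q)ᵀ = Z * Zᵀ := by
  rw [mul_permMat, Matrix.transpose_submatrix, Matrix.submatrix_mul_equiv, Matrix.submatrix_id_id]

theorem zeroNorm_eq_sum_card (A : Matrix (Fin n) (Fin K) ℝ) :
    zeroNorm A = ∑ i, (Finset.univ.filter fun k => A i k ≠ 0).card := by
  simp only [zeroNorm, Finset.card_filter, Fintype.sum_prod_type]

theorem two_mul_card_row_ne_zero_le_zeroNorm {A : Matrix (Fin n) (Fin K) ℝ}
    (hA : ∀ i, ∑ k, A i k = 0) :
    2 * (Finset.univ.filter fun i => A.row i ≠ 0).card ≤ zeroNorm A := by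
  rw [zeroNorm_eq_sum_card, mul_comm, ← smul_eq_mul]
  calc
    _ ≤ ∑ i with A.row i ≠ 0, (Finset.univ.filter fun k => A i k ≠ 0).card :=
      Finset.card_nsmul_le_sum _ _ _ fun i hi =>
        one_lt_card_ne_zero_of_sum_eq_zero (Finset.mem_filter.mp hi).2 (hA i)
    _ ≤ _ := Finset.sum_le_sum_of_subset (Finset.filter_subset _ _)

theorem sum_sq_sub_mul_transpose_le {Z Z' : Matrix (Fin n) (Fin K) ℝ}
    (hZ : ∀ i, Z i ∈ stdSimplex ℝ (Fin K)) (hZ' : ∀ i, Z' i ∈ stdSimplex ℝ (Fin K)) :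
    ∑ i, ∑ j, ((Z * Zᵀ) i j - (Z' * Z'ᵀ) i j) ^ 2 ≤ n * zeroNorm (Z - Z') := by
  set s := Finset.univ.filter fun i => (Z - Z').row i ≠ 0 with hs
  have hentry (i j : Fin n) : ((Z * Zᵀ) i j - (Z' * Z'ᵀ) i j) ^ 2 ≤ 1 :=
    (sq_le_one_iff_abs_le_one _).mpr <| Real.dist_le_of_mem_Icc_01
      (dotProduct_mem_Icc_of_mem_stdSimplex (hZ i) (hZ j))
      (dotProduct_mem_Icc_of_mem_stdSimplex (hZ' i) (hZ' j))
  have hagree (i : Fin n) (hi : i ∉ s) : Z i = Z' i :=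
    sub_eq_zero.mp (show (Z - Z').row i = 0 by simpa [hs] using hi)
  have hcard : 2 * s.card ≤ zeroNorm (Z - Z') :=
    two_mul_card_row_ne_zero_le_zeroNorm fun i => by simp [(hZ i).2, (hZ' i).2]
  calc
    _ ≤ 2 * (Fintype.card (Fin n) : ℝ) * s.card :=
      sum_sum_le_two_mul_card_mul_card s hentry fun i hi j hj => by
        simp [Matrix.mul_apply, hagree i hi, hagree j hj]
    _ = n * (2 * s.card : ℕ) := by
      push_cast [Fintype.card_fin]
      ring
    _ ≤ n * zeroNorm (Z - Z') := by gcongr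

theorem deltaTilde_mul_transpose_le {Z Z' : Matrix (Fin n) (Fin K) ℝ}
    (hZ : ∀ i, Z i ∈ stdSimplex ℝ (Fin K)) (hZ' : ∀ i, Z' i ∈ stdSimplex ℝ (Fin K)) :
    deltaTilde (Z * Zᵀ) (Z' * Z'ᵀ) ≤ 1 / n * zeroNorm (Z - Z') := by
  calc
    _ ≤ 1 / (n : ℝ) ^ 2 * (n * zeroNorm (Z - Z')) := by
      rw [deltaTilde]
      gcongr
      exact sum_sq_sub_mul_transpose_le hZ hZ'
    _ = 1 / n * zeroNorm (Z - Z') := by field_simp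

theorem exists_deltaZ_eq (Z Z' : Matrix (Fin n) (Fin K) ℝ) :
    ∃ q : Equiv.Perm (Fin K), deltaZ Z Z' = 1 / n * zeroNorm (Z * permMat q - Z') := by
  obtain ⟨q, -, hq⟩ := Finset.exists_mem_eq_inf' (s := Finset.univ) ⟨1, Finset.mem_univ 1⟩
    fun q : Equiv.Perm (Fin K) => (zeroNorm (Z * permMat q - Z') : ℝ)
  exact ⟨q, congrArg (1 / (n : ℝ) * ·) hq⟩

theorem deltaTilde_nonneg (C C' : Matrix (Fin n) (Fin n) ℝ) : 0 ≤ deltaTilde C C' := by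
  unfold deltaTilde
  positivity

theorem deltaTilde_le_four_mul_deltaZ_general {Z Z' : Matrix (Fin n) (Fin K) ℝ}
    (hZ : ∀ i, Z i ∈ stdSimplex ℝ (Fin K)) (hZ' : ∀ i, Z' i ∈ stdSimplex ℝ (Fin K)) :
    deltaTilde (Z * Zᵀ) (Z' * Z'ᵀ) ≤ deltaZ Z Z' := by
  obtain ⟨q, hq⟩ := exists_deltaZ_eq Z Z'
  rw [hq, ← mul_permMat_mul_transpose Z q]
  exact deltaTilde_mul_transpose_le (fun i => mul_permMat_mem_stdSimplex (hZ i) q) hZ'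

end

/-- δ̃(C, C') ≤ 4 δ(Z, Z') for clustering matrices C = ZZᵀ, C' = Z'Z'ᵀ. -/
theorem deltaTilde_le_four_mul_deltaZ {n K : ℕ}
    (Z Z' : Matrix (Fin n) (Fin K) ℝ)
    (hZ : IsClusterMembership Z) (hZ' : IsClusterMembership Z') :
    deltaTilde (Z * Zᵀ) (Z' * Z'ᵀ) ≤ 4 * deltaZ Z Z' := by
  have hle := deltaTilde_le_four_mul_deltaZ_general hZ.mem_stdSimplex hZ'.mem_stdSimplex
  linarith [deltaTilde_nonneg (Z * Zᵀ) (Z' * Z'ᵀ)]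
end

section
/- Let Z, Z' ∈ {0,1}^{n×K} be cluster membership matrices such that every cluster under Z and every cluster under Z' has size exactly n/K (so K divides n), and let C = ZZ^T, C' = Z'Z'^T. Then δ̃(C, C') ≤ (4/K) δ(Z, Z'). -/
open Matrix BigOperators

/-- The size of cluster k under Z. -/
noncomputable def clusterSize {n K : ℕ} (Z : Matrix (Fin n) (Fin K) ℝ) (k : Fin K) : ℕ :=
  (Finset.univ.filter fun i => Z i k = 1).card

/-!
A membership matrix is the indicator matrix of a labelling, and every mislabelled point contributes
two nonzero entries to `ZQ - Z'`. So if `Q` matches the labels optimally, `n δ(Z, Z')` is twice the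
number of mislabelled points, while `n² δ̃(C, C')` is the number of pairs of points that only one of
the two clusterings puts together. In such a pair one of the points, say `i`, is mislabelled, and
the other lies in one of the two clusters of `i`; hence there are at most `2 (m + m')` of these
pairs per mislabelled point when the clusters have size at most `m` and `m'`.
-/

open Finset

section DisagreementPairs

variable {ι κ κ' : Type*} [Fintype ι] [DecidableEq κ] [DecidableEq κ']

/-- The ordered pairs of points that exactly one of the clusterings with labellings `z` and `z'`
puts together; their number is the Mirkin distance of the clusterings. -/
def disagreementPairs (z : ι → κ) (z' : ι → κ') : Finset (ι × ι) :=
  {p | ¬(z p.1 = z p.2 ↔ z' p.1 = z' p.2)}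

lemma card_filter_le_two_mul_sum_of_cover (r : ι → ι → Prop) [DecidableRel r]
    (hr : ∀ i j, r i j → r j i) (s : Finset ι) (hs : ∀ i j, r i j → i ∈ s ∨ j ∈ s) :
    #{p : ι × ι | r p.1 p.2} ≤ 2 * ∑ i ∈ s, #{j | r i j} := by
  classical
  let rows : Finset (ι × ι) := s.biUnion fun i => ({j | r i j} : Finset ι).image (Prod.mk i)
  have hsub : ({p : ι × ι | r p.1 p.2} : Finset (ι × ι)) ⊆ rows ∪ rows.image Prod.swap := by
    rintro ⟨i, j⟩ hij
    have hij : r i j := by simpa using hij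
    rcases hs i j hij with hi | hj
    · exact mem_union_left _ (by simp [rows, hi, hij])
    · exact mem_union_right _ (by simp [rows, hj, hr i j hij])
  have hrows : #rows ≤ ∑ i ∈ s, #{j | r i j} :=
    card_biUnion_le.trans (sum_le_sum fun _ _ => card_image_le)
  calc #{p : ι × ι | r p.1 p.2} ≤ #rows + #(rows.image Prod.swap) :=
        (card_le_card hsub).trans (card_union_le _ _)
    _ ≤ 2 * ∑ i ∈ s, #{j | r i j} := by
        linarith [card_image_le (s := rows) (f := Prod.swap)]

lemma card_disagreementPairs_le {q : κ → κ'} (hq : q.Injective) (z : ι → κ) (z' : ι → κ') :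
    #(disagreementPairs z z') ≤
      2 * ∑ i with q (z i) ≠ z' i, (#{j | z j = z i} + #{j | z' j = z' i}) := by
  classical
  refine (card_filter_le_two_mul_sum_of_cover (fun i j => ¬(z i = z j ↔ z' i = z' j))
    (fun i j h => by rwa [eq_comm, eq_comm (a := z' j)]) {i | q (z i) ≠ z' i} ?_).trans ?_
  · intro i j hij
    by_contra! h
    obtain ⟨hi, hj⟩ : q (z i) = z' i ∧ q (z j) = z' j := by simpa using h
    exact hij (by rw [← hi, ← hj, hq.eq_iff])
  · gcongr with i
    refine (card_le_card fun j => ?_).trans (card_union_le _ _)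
    simp only [mem_filter_univ, mem_union]
    grind

end DisagreementPairs

section LabelMatrix

variable {ι κ : Type*} [DecidableEq κ]

/-- The membership matrix of the clustering in which the point `i` has the label `z i`. -/
def labelMatrix (z : ι → κ) : Matrix ι κ ℝ :=
  .of fun i k => if z i = k then 1 else 0

lemma labelMatrix_apply (z : ι → κ) (i : ι) (k : κ) :
    labelMatrix z i k = if z i = k then 1 else 0 :=
  rfl

lemma labelMatrix_mul_transpose_apply [Fintype κ] (z : ι → κ) (i j : ι) :
    (labelMatrix z * (labelMatrix z)ᵀ) i j = if z i = z j then 1 else 0 := by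
  simp [Matrix.mul_apply, labelMatrix_apply, eq_comm]

end LabelMatrix

section ClusterMembership

variable {n K : ℕ}

lemma IsClusterMembership.exists_eq_labelMatrix {Z : Matrix (Fin n) (Fin K) ℝ}
    (hZ : IsClusterMembership Z) : ∃ z : Fin n → Fin K, Z = labelMatrix z := by
  choose z hz huniq using hZ.2
  refine ⟨z, Matrix.ext fun i k => ?_⟩
  rw [labelMatrix_apply]
  split_ifs with h
  · exact h ▸ hz i
  · exact (hZ.1 i k).resolve_right fun h1 => h (huniq i k h1).symm

lemma clusterSize_labelMatrix (z : Fin n → Fin K) (k : Fin K) :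
    clusterSize (labelMatrix z) k = #{i | z i = k} := by
  simp [clusterSize, labelMatrix_apply]

lemma labelMatrix_mul_permMat (z : Fin n → Fin K) (q : Equiv.Perm (Fin K)) :
    labelMatrix z * permMat q = labelMatrix (q ∘ z) := by
  ext i k
  simp only [Matrix.mul_apply, labelMatrix_apply, permMat, Matrix.of_apply, ite_mul, one_mul,
    zero_mul, sum_ite_eq, mem_univ, if_true, Function.comp_apply]

lemma zeroNorm_labelMatrix_sub_labelMatrix (z z' : Fin n → Fin K) :
    zeroNorm (labelMatrix z - labelMatrix z') = 2 * hammingDist z z' := by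
  have hrow (i : Fin n) :
      #{k | (labelMatrix z - labelMatrix z') i k ≠ 0} = if z i ≠ z' i then 2 else 0 := by
    split_ifs with h
    · rw [← card_pair h]
      congr 1
      ext k
      simp only [Matrix.sub_apply, labelMatrix_apply, mem_insert, mem_singleton]
      grind
    · simp [labelMatrix_apply, not_not.mp h]
  calc zeroNorm (labelMatrix z - labelMatrix z')
      = ∑ i, #{k | (labelMatrix z - labelMatrix z') i k ≠ 0} := by
        simp only [zeroNorm, card_filter, Fintype.sum_prod_type]
    _ = 2 * hammingDist z z' := by
        simp only [hrow, hammingDist, ← sum_filter, sum_const, smul_eq_mul, mul_comm]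

lemma exists_perm_deltaZ_labelMatrix_eq (z z' : Fin n → Fin K) :
    ∃ q : Equiv.Perm (Fin K),
      deltaZ (labelMatrix z) (labelMatrix z') = 2 * hammingDist (q ∘ z) z' / n := by
  obtain ⟨q, -, hq⟩ := exists_mem_eq_inf' (s := univ) ⟨1, mem_univ 1⟩ fun q : Equiv.Perm (Fin K) =>
    (zeroNorm (labelMatrix z * permMat q - labelMatrix z') : ℝ)
  refine ⟨q, ?_⟩
  rw [deltaZ, hq, labelMatrix_mul_permMat, zeroNorm_labelMatrix_sub_labelMatrix]
  push_cast
  ring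

lemma deltaTilde_labelMatrix {κ κ' : Type*} [Fintype κ] [DecidableEq κ] [Fintype κ']
    [DecidableEq κ'] (z : Fin n → κ) (z' : Fin n → κ') :
    deltaTilde (labelMatrix z * (labelMatrix z)ᵀ) (labelMatrix z' * (labelMatrix z')ᵀ) =
      #(disagreementPairs z z') / n ^ 2 := by
  have hentry (i j : Fin n) :
      ((if z i = z j then (1 : ℝ) else 0) - if z' i = z' j then 1 else 0) ^ 2 =
        if ¬(z i = z j ↔ z' i = z' j) then 1 else 0 := by
    by_cases h : z i = z j <;> by_cases h' : z' i = z' j <;> simp [h, h']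
  simp only [deltaTilde, labelMatrix_mul_transpose_apply, hentry, disagreementPairs,
    natCast_card_filter, Fintype.sum_prod_type]
  ring

theorem deltaTilde_le_four_div_K_mul_deltaZ_general {α α' : ℝ} {Z Z' : Matrix (Fin n) (Fin K) ℝ}
    (hZ : IsClusterMembership Z) (hZ' : IsClusterMembership Z')
    (hsize : ∀ k, clusterSize Z k ≤ α * n) (hsize' : ∀ k, clusterSize Z' k ≤ α' * n) :
    deltaTilde (Z * Zᵀ) (Z' * Z'ᵀ) ≤ (α + α') * deltaZ Z Z' := by
  obtain ⟨z, rfl⟩ := hZ.exists_eq_labelMatrix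
  obtain ⟨z', rfl⟩ := hZ'.exists_eq_labelMatrix
  simp only [clusterSize_labelMatrix] at hsize hsize'
  obtain ⟨q, hq⟩ := exists_perm_deltaZ_labelMatrix_eq z z'
  have hpairs : (#(disagreementPairs z z') : ℝ) ≤
      2 * (hammingDist (q ∘ z) z' * (α * n + α' * n)) := by
    calc (#(disagreementPairs z z') : ℝ)
        ≤ 2 * ∑ i with q (z i) ≠ z' i, ((#{j | z j = z i} : ℝ) + #{j | z' j = z' i}) :=
          mod_cast card_disagreementPairs_le q.injective z z'
      _ ≤ 2 * ∑ i with q (z i) ≠ z' i, (α * n + α' * n) := by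
          gcongr with i
          exacts [hsize (z i), hsize' (z' i)]
      _ = 2 * (hammingDist (q ∘ z) z' * (α * n + α' * n)) := by
          rw [sum_const, nsmul_eq_mul]
          rfl
  rw [deltaTilde_labelMatrix, hq]
  calc (#(disagreementPairs z z') : ℝ) / n ^ 2
      ≤ 2 * (hammingDist (q ∘ z) z' * (α * n + α' * n)) / n ^ 2 := by gcongr
    _ = (α + α') * (2 * hammingDist (q ∘ z) z' / n) := by
        rcases eq_or_ne (n : ℝ) 0 with hn | hn
        · simp [hn]
        · field_simp

end ClusterMembership

/-- if all clusters under Z and Z' have size exactly n/K (with K ∣ n), then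
δ̃(ZZᵀ, Z'Z'ᵀ) ≤ (4/K) δ(Z, Z'). -/
theorem deltaTilde_le_four_div_K_mul_deltaZ {n K : ℕ}
    (Z Z' : Matrix (Fin n) (Fin K) ℝ)
    (hZ : IsClusterMembership Z) (hZ' : IsClusterMembership Z')
    (hdvd : K ∣ n)
    (hsizeZ : ∀ k, clusterSize Z k = n / K)
    (hsizeZ' : ∀ k, clusterSize Z' k = n / K) :
    deltaTilde (Z * Zᵀ) (Z' * Z'ᵀ) ≤ (4 / (K : ℝ)) * deltaZ Z Z' := by
  -- `1 / K` in place of `2 / K` would give the bound with constant `2 / K`.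
  have hfrac : ((n / K : ℕ) : ℝ) ≤ 2 / K * n :=
    Nat.cast_div_le.trans (by rw [div_mul_eq_mul_div]; gcongr; linarith [n.cast_nonneg (α := ℝ)])
  convert deltaTilde_le_four_div_K_mul_deltaZ_general hZ hZ' (fun k => hsizeZ k ▸ hfrac)
    (fun k => hsizeZ' k ▸ hfrac) using 2
  ring
end

section
/- Let Z, Z' ∈ {0,1}^{n×K} be cluster membership matrices. Then for every K×K permutation matrix Q, ‖ZZ^T − Z'Z'^T‖_F ≤ 2√n · ‖ZQ − Z'‖_F. -/
open Matrix BigOperators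

/-- The Frobenius norm of a matrix. -/
noncomputable def frobNorm {a b : ℕ} (A : Matrix (Fin a) (Fin b) ℝ) : ℝ :=
  Real.sqrt (∑ i, ∑ j, (A i j)^2)

/-! In the Frobenius norm, the telescoping identity `XXᴴ - BBᴴ = X(X - B)ᴴ + (X - B)Bᴴ` and
submultiplicativity bound the difference of two Gram matrices by `(‖X‖ + ‖B‖) ‖X - B‖`. If
`QQᴴ = 1`, then passing from `A` to `X = AQ` changes neither the Gram matrix `AAᴴ` nor the norm
`‖A‖`, whose square is the trace of `AAᴴ`. A membership matrix has `n` unit rows, hence norm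
`√n`. -/

theorem mul_mul_conjTranspose_mul {m n k R : Type*} [Fintype n] [Fintype k] [DecidableEq n]
    [Semiring R] [StarRing R] (A : Matrix m n R) {Q : Matrix n k R} (hQ : Q * Qᴴ = 1) :
    A * Q * (A * Q)ᴴ = A * Aᴴ := by
  rw [conjTranspose_mul, Matrix.mul_assoc, ← Matrix.mul_assoc Q, hQ, Matrix.one_mul]

section Frobenius

open scoped Matrix.Norms.Frobenius

variable {m n : Type*} [Fintype m] [Fintype n]

theorem frobNorm_eq_norm {a b : ℕ} (A : Matrix (Fin a) (Fin b) ℝ) : frobNorm A = ‖A‖ := by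
  simp [frobNorm, frobenius_norm_def, Real.sqrt_eq_rpow]

section Rows

variable {α : Type*} [SeminormedAddCommGroup α]

theorem frobenius_norm_sq_eq_sum (A : Matrix m n α) : ‖A‖ ^ 2 = ∑ i, ∑ j, ‖A i j‖ ^ 2 := by
  simp only [frobenius_norm_def, ← Real.sqrt_eq_rpow, Real.rpow_two]
  exact Real.sq_sqrt (by positivity)

theorem frobenius_norm_eq_sqrt_card {A : Matrix m n α} (hA : ∀ i, ‖WithLp.toLp 2 (A i)‖ = 1) :
    ‖A‖ = √(Fintype.card m) := by
  have sum_sq_row (i : m) : ∑ j, ‖A i j‖ ^ 2 = 1 := by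
    simpa only [hA, one_pow] using (PiLp.norm_sq_eq_of_L2 _ (WithLp.toLp 2 (A i))).symm
  rw [← Real.sqrt_sq (norm_nonneg A), frobenius_norm_sq_eq_sum]
  simp only [sum_sq_row, Finset.sum_const, Finset.card_univ, nsmul_eq_mul, mul_one]

end Rows

variable {k 𝕜 : Type*} [Fintype k] [RCLike 𝕜]

theorem trace_mul_conjTranspose_self_eq_norm_sq (A : Matrix m n 𝕜) :
    trace (A * Aᴴ) = ((‖A‖ ^ 2 : ℝ) : 𝕜) := by
  simp [trace, mul_apply, frobenius_norm_sq_eq_sum, RCLike.mul_conj]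

theorem frobenius_norm_mul_of_mul_conjTranspose_eq_one [DecidableEq n] (A : Matrix m n 𝕜)
    {Q : Matrix n k 𝕜} (hQ : Q * Qᴴ = 1) : ‖A * Q‖ = ‖A‖ := by
  have hsq : ‖A * Q‖ ^ 2 = ‖A‖ ^ 2 := by
    rw [← RCLike.ofReal_inj (K := 𝕜), ← trace_mul_conjTranspose_self_eq_norm_sq,
      ← trace_mul_conjTranspose_self_eq_norm_sq, mul_mul_conjTranspose_mul A hQ]
  exact (sq_eq_sq₀ (norm_nonneg _) (norm_nonneg _)).1 hsq

theorem frobenius_norm_mul_conjTranspose_sub_le (A B : Matrix m n 𝕜) :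
    ‖A * Aᴴ - B * Bᴴ‖ ≤ (‖A‖ + ‖B‖) * ‖A - B‖ := by
  have telescope : A * Aᴴ - B * Bᴴ = A * (A - B)ᴴ + (A - B) * Bᴴ := by
    rw [conjTranspose_sub, Matrix.mul_sub, Matrix.sub_mul, sub_add_sub_cancel]
  calc ‖A * Aᴴ - B * Bᴴ‖
      ≤ ‖A * (A - B)ᴴ‖ + ‖(A - B) * Bᴴ‖ := telescope ▸ norm_add_le _ _
    _ ≤ ‖A‖ * ‖(A - B)ᴴ‖ + ‖A - B‖ * ‖Bᴴ‖ :=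
      add_le_add (frobenius_norm_mul _ _) (frobenius_norm_mul _ _)
    _ = (‖A‖ + ‖B‖) * ‖A - B‖ := by
      rw [frobenius_norm_conjTranspose, frobenius_norm_conjTranspose]
      ring

theorem frob_clusteringMatrix_diff_le_general [DecidableEq n] (A : Matrix m n 𝕜)
    (B : Matrix m k 𝕜) {Q : Matrix n k 𝕜} (hQ : Q * Qᴴ = 1) :
    ‖A * Aᴴ - B * Bᴴ‖ ≤ (‖A‖ + ‖B‖) * ‖A * Q - B‖ := by
  simpa only [mul_mul_conjTranspose_mul A hQ, frobenius_norm_mul_of_mul_conjTranspose_eq_one A hQ]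
    using frobenius_norm_mul_conjTranspose_sub_le (A * Q) B

end Frobenius

theorem permMat_eq_permMatrix {K : ℕ} (q : Equiv.Perm (Fin K)) : permMat q = q.permMatrix ℝ := by
  ext i j
  simp [permMat, PEquiv.toMatrix_apply, eq_comm]

theorem permMat_mul_conjTranspose_self {K : ℕ} (q : Equiv.Perm (Fin K)) :
    permMat q * (permMat q)ᴴ = 1 := by
  rw [permMat_eq_permMatrix, conjTranspose_permMatrix, ← permMatrix_mul, inv_mul_cancel,
    permMatrix_one]

namespace IsClusterMembership

variable {n K : ℕ} {Z : Matrix (Fin n) (Fin K) ℝ}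

theorem exists_row_eq_single (hZ : IsClusterMembership Z) (i : Fin n) :
    ∃ k, Z i = Pi.single k 1 := by
  obtain ⟨k, hk, huniq⟩ := hZ.2 i
  refine ⟨k, funext fun l => ?_⟩
  obtain rfl | hlk := eq_or_ne l k
  · rw [hk, Pi.single_eq_same]
  · rw [(hZ.1 i l).resolve_right (mt (huniq l) hlk), Pi.single_eq_of_ne hlk]

theorem frobNorm_eq_sqrt (hZ : IsClusterMembership Z) : frobNorm Z = √n := by
  have unit_row (i : Fin n) : ‖WithLp.toLp 2 (Z i)‖ = 1 := by
    obtain ⟨k, hk⟩ := hZ.exists_row_eq_single i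
    rw [hk, PiLp.toLp_single, PiLp.norm_single, norm_one]
  rw [frobNorm_eq_norm, frobenius_norm_eq_sqrt_card unit_row, Fintype.card_fin]

end IsClusterMembership

/-- for cluster membership matrices Z, Z' and every K×K permutation matrix Q,
‖ZZᵀ − Z'Z'ᵀ‖_F ≤ 2√n ‖ZQ − Z'‖_F. -/
theorem frob_clusteringMatrix_diff_le {n K : ℕ}
    (Z Z' : Matrix (Fin n) (Fin K) ℝ)
    (hZ : IsClusterMembership Z) (hZ' : IsClusterMembership Z') :
    ∀ q : Equiv.Perm (Fin K),
      frobNorm (Z * Zᵀ - Z' * Z'ᵀ) ≤ 2 * Real.sqrt n * frobNorm (Z * permMat q - Z') := by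
  intro q
  simpa only [← frobNorm_eq_norm, conjTranspose_eq_transpose_of_trivial, hZ.frobNorm_eq_sqrt,
    hZ'.frobNorm_eq_sqrt, ← two_mul] using
    frob_clusteringMatrix_diff_le_general Z Z' (permMat_mul_conjTranspose_self q)
end

section
/- Fix n, T ∈ ℕ and a real τ > 0. For ℓ = 1,…,T let y^{(ℓ)} ∈ {0,1}^{n×n} and let Ĉ^{(ℓ)}, C be real n×n matrices. Set N_{ij} = Σ_{ℓ=1}^T y^{(ℓ)}_{ij}, and define Ĉ by Ĉ_{ij} = 1_{\{N_{ij} ≥ τ\}} · (Σ_{ℓ=1}^T y^{(ℓ)}_{ij} Ĉ^{(ℓ)}_{ij}) / N_{ij}. Then Σ_{i,j} (Ĉ_{ij} − C_{ij} 1_{\{N_{ij} ≥ τ\}})² ≤ (1/τ) · Σ_{ℓ=1}^T Σ_{i,j} y^{(ℓ)}_{ij} (Ĉ^{(ℓ)}_{ij} − C_{ij})². -/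
open Matrix BigOperators

/-!
Both sides are sums over the pairs `(i, j)`, so it suffices to compare them entry by entry. An entry
whose count is below `τ` contributes zero on the left. Otherwise the entry of `Ĉ` is a weighted mean
with total weight `N ≥ τ`; by Cauchy–Schwarz, `N` times its squared deviation from `C i j` is at
most the weighted sum of the squared deviations, and dividing by `N ≥ τ` gives the factor `1 / τ`.
-/

section WeightedMean

variable {ι 𝕜 : Type*} [Field 𝕜] {s : Finset ι} {w : ι → 𝕜}

lemma weighted_mean_sub_eq (hW : ∑ i ∈ s, w i ≠ 0) (x : ι → 𝕜) (c : 𝕜) :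
    (∑ i ∈ s, w i * x i) / ∑ i ∈ s, w i - c
      = (∑ i ∈ s, w i * (x i - c)) / ∑ i ∈ s, w i := by
  simp only [mul_sub, Finset.sum_sub_distrib, ← Finset.sum_mul]
  rw [sub_div, mul_div_cancel_left₀ c hW]

variable [LinearOrder 𝕜] [IsStrictOrderedRing 𝕜]

lemma sum_mul_sq_sub_nonneg (hw : ∀ i ∈ s, 0 ≤ w i) (x : ι → 𝕜) (c : 𝕜) :
    0 ≤ ∑ i ∈ s, w i * (x i - c) ^ 2 :=
  Finset.sum_nonneg fun i hi => mul_nonneg (hw i hi) (sq_nonneg _)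

lemma sq_weighted_mean_sub_le (hw : ∀ i ∈ s, 0 ≤ w i) (hW : 0 < ∑ i ∈ s, w i)
    (x : ι → 𝕜) (c : 𝕜) :
    ((∑ i ∈ s, w i * x i) / ∑ i ∈ s, w i - c) ^ 2
      ≤ (∑ i ∈ s, w i * (x i - c) ^ 2) / ∑ i ∈ s, w i := by
  have cauchy_schwarz : (∑ i ∈ s, w i * (x i - c)) ^ 2
      ≤ (∑ i ∈ s, w i) * ∑ i ∈ s, w i * (x i - c) ^ 2 :=
    Finset.sum_sq_le_sum_mul_sum_of_sq_le_mul s hw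
      (fun i hi => mul_nonneg (hw i hi) (sq_nonneg _)) fun i _ => le_of_eq (by ring)
  calc ((∑ i ∈ s, w i * x i) / ∑ i ∈ s, w i - c) ^ 2
      = (∑ i ∈ s, w i * (x i - c)) ^ 2 / (∑ i ∈ s, w i) ^ 2 := by
        rw [weighted_mean_sub_eq hW.ne', div_pow]
    _ ≤ ((∑ i ∈ s, w i) * ∑ i ∈ s, w i * (x i - c) ^ 2) / (∑ i ∈ s, w i) ^ 2 := by gcongr
    _ = (∑ i ∈ s, w i * (x i - c) ^ 2) / ∑ i ∈ s, w i := by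
        rw [sq (∑ i ∈ s, w i), mul_div_mul_left _ _ hW.ne']

lemma sq_thresholded_weighted_mean_sub_le {τ : 𝕜} (hτ : 0 < τ) (hw : ∀ i ∈ s, 0 ≤ w i)
    (x : ι → 𝕜) (c : 𝕜) :
    ((if τ ≤ ∑ i ∈ s, w i then 1 else 0) * (∑ i ∈ s, w i * x i) / ∑ i ∈ s, w i
        - c * (if τ ≤ ∑ i ∈ s, w i then 1 else 0)) ^ 2
      ≤ 1 / τ * ∑ i ∈ s, w i * (x i - c) ^ 2 := by
  have sum_nonneg := sum_mul_sq_sub_nonneg hw x c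
  rw [one_div_mul_eq_div]
  split_ifs with hτW
  · rw [one_mul, mul_one]
    exact (sq_weighted_mean_sub_le hw (hτ.trans_le hτW) x c).trans
      (div_le_div_of_nonneg_left sum_nonneg hτ hτW)
  · rw [zero_mul, zero_div, mul_zero, sub_zero, zero_pow two_ne_zero]
    exact div_nonneg sum_nonneg hτ.le

end WeightedMean

theorem pace_E1_bound_general {L m n 𝕜 : Type*} [Fintype L] [Fintype m] [Fintype n]
    [Field 𝕜] [LinearOrder 𝕜] [IsStrictOrderedRing 𝕜] {τ : 𝕜} (hτ : 0 < τ)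
    {y : L → Matrix m n 𝕜} (hy : ∀ ℓ i j, 0 ≤ y ℓ i j)
    (Chatl : L → Matrix m n 𝕜) (C : Matrix m n 𝕜)
    {N : Matrix m n 𝕜} (hN : ∀ i j, N i j = ∑ ℓ, y ℓ i j)
    {Chat : Matrix m n 𝕜}
    (hChat : ∀ i j, Chat i j =
      (if τ ≤ N i j then 1 else 0) * (∑ ℓ, y ℓ i j * Chatl ℓ i j) / N i j) :
    ∑ i, ∑ j, (Chat i j - C i j * (if τ ≤ N i j then 1 else 0)) ^ 2
      ≤ 1 / τ * ∑ ℓ, ∑ i, ∑ j, y ℓ i j * (Chatl ℓ i j - C i j) ^ 2 := by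
  have entry_bound : ∀ i j, (Chat i j - C i j * (if τ ≤ N i j then 1 else 0)) ^ 2
      ≤ 1 / τ * ∑ ℓ, y ℓ i j * (Chatl ℓ i j - C i j) ^ 2 := fun i j => by
    rw [hChat, hN]
    exact sq_thresholded_weighted_mean_sub_le hτ (fun ℓ _ => hy ℓ i j) _ _
  calc ∑ i, ∑ j, (Chat i j - C i j * (if τ ≤ N i j then 1 else 0)) ^ 2
      ≤ ∑ i, ∑ j, 1 / τ * ∑ ℓ, y ℓ i j * (Chatl ℓ i j - C i j) ^ 2 :=
        Finset.sum_le_sum fun i _ => Finset.sum_le_sum fun j _ => entry_bound i j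
    _ = 1 / τ * ∑ ℓ, ∑ i, ∑ j, y ℓ i j * (Chatl ℓ i j - C i j) ^ 2 := by
        simp only [← Finset.mul_sum]
        rw [Finset.sum_comm_cycle]

/-- deterministic core of the PACE analysis: with
N_{ij} = Σ_ℓ y^{(ℓ)}_{ij} and Ĉ_{ij} = 1_{N_{ij} ≥ τ} (Σ_ℓ y^{(ℓ)}_{ij} Ĉ^{(ℓ)}_{ij})/N_{ij},
one has Σ_{i,j} (Ĉ_{ij} − C_{ij} 1_{N_{ij} ≥ τ})² ≤ (1/τ) Σ_ℓ Σ_{i,j} y^{(ℓ)}_{ij}(Ĉ^{(ℓ)}_{ij} − C_{ij})². -/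
theorem pace_E1_bound {n T : ℕ} (τ : ℝ) (hτ : 0 < τ)
    (y : Fin T → Matrix (Fin n) (Fin n) ℝ)
    (hy : ∀ ℓ i j, y ℓ i j = 0 ∨ y ℓ i j = 1)
    (Chatl : Fin T → Matrix (Fin n) (Fin n) ℝ)
    (C : Matrix (Fin n) (Fin n) ℝ)
    (N : Matrix (Fin n) (Fin n) ℝ)
    (hN : ∀ i j, N i j = ∑ ℓ, y ℓ i j)
    (Chat : Matrix (Fin n) (Fin n) ℝ)
    (hChat : ∀ i j, Chat i j =
      (if τ ≤ N i j then 1 else 0) * (∑ ℓ, y ℓ i j * Chatl ℓ i j) / N i j) :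
    ∑ i, ∑ j, (Chat i j - C i j * (if τ ≤ N i j then 1 else 0))^2
      ≤ (1 / τ) * ∑ ℓ, ∑ i, ∑ j, y ℓ i j * (Chatl ℓ i j - C i j)^2 :=
  pace_E1_bound_general hτ
    (fun ℓ i j => (hy ℓ i j).elim Eq.ge fun h => h ▸ zero_le_one) Chatl C hN hChat
end

section
/- Fix n, T ∈ ℕ and a real τ > 0. For ℓ = 1,…,T let y^{(ℓ)} ∈ {0,1}^{n×n}, let Ĉ^{(ℓ)} be real n×n matrices, and let C ∈ {0,1}^{n×n}. Set N_{ij} = Σ_{ℓ=1}^T y^{(ℓ)}_{ij} and Ĉ_{ij} = 1_{\{N_{ij} ≥ τ\}} · (Σ_{ℓ=1}^T y^{(ℓ)}_{ij} Ĉ^{(ℓ)}_{ij}) / N_{ij}. Then (1/n²)‖Ĉ − C‖_F² ≤ (1/(τ n²)) · Σ_{ℓ=1}^T Σ_{i,j} y^{(ℓ)}_{ij} (Ĉ^{(ℓ)}_{ij} − C_{ij})² + (1/n²) · Σ_{i,j} C_{ij} 1_{\{N_{ij} < τ\}}. -/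
open Matrix BigOperators

/-!
At an entry of weight `N ≥ τ`, the estimate `Ĉ` is a weighted mean, so Jensen's inequality for the
convex function `z ↦ |z - C|²` bounds its squared error by the weighted mean of the squared errors,
whose normalising factor `1 / N` is at most `1 / τ`. At every other entry `Ĉ = 0`, so the squared
error is `C²`, which is `C` for binary `C`.
-/

section ThresholdedMean

variable {ι E : Type*} {s : Finset ι} {w : ι → ℝ}

/-- The mean of the values `x` with weights `w` over `s`, replaced by `0` when the total weight is
below the threshold `τ`. It models one entry of the PACE estimator, the weights recording which of
the individual estimates observe that entry. -/
noncomputable def thresholdedMean [AddCommGroup E] [Module ℝ E] (τ : ℝ) (s : Finset ι)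
    (w : ι → ℝ) (x : ι → E) : E :=
  if τ ≤ ∑ i ∈ s, w i then s.centerMass w x else 0

lemma thresholdedMean_eq_ite_mul_div (τ : ℝ) (s : Finset ι) (w x : ι → ℝ) :
    thresholdedMean τ s w x =
      (if τ ≤ ∑ i ∈ s, w i then 1 else 0) * (∑ i ∈ s, w i * x i) / ∑ i ∈ s, w i := by
  simp only [thresholdedMean, Finset.centerMass, smul_eq_mul, ite_mul, one_mul, zero_mul,
    div_eq_inv_mul, mul_ite, mul_zero]

lemma dist_centerMass_pow_le [SeminormedAddCommGroup E] [NormedSpace ℝ E]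
    (hw : ∀ i ∈ s, 0 ≤ w i) (hpos : 0 < ∑ i ∈ s, w i) (x : ι → E) (c : E) (p : ℕ) :
    dist (s.centerMass w x) c ^ p ≤ (∑ i ∈ s, w i)⁻¹ * ∑ i ∈ s, w i * dist (x i) c ^ p :=
  ((convexOn_dist c convex_univ).pow (fun _ _ => dist_nonneg) p).map_centerMass_le hw hpos
    fun _ _ => Set.mem_univ _

lemma dist_thresholdedMean_pow_le [SeminormedAddCommGroup E] [NormedSpace ℝ E] {τ : ℝ}
    (hτ : 0 < τ) (hw : ∀ i ∈ s, 0 ≤ w i) (x : ι → E) (c : E) (p : ℕ) :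
    dist (thresholdedMean τ s w x) c ^ p ≤
      τ⁻¹ * ∑ i ∈ s, w i * dist (x i) c ^ p + if ∑ i ∈ s, w i < τ then ‖c‖ ^ p else 0 := by
  have hsum : 0 ≤ ∑ i ∈ s, w i * dist (x i) c ^ p :=
    Finset.sum_nonneg fun i hi => mul_nonneg (hw i hi) (by positivity)
  rcases le_or_gt τ (∑ i ∈ s, w i) with hle | hlt
  · rw [thresholdedMean, if_pos hle, if_neg hle.not_gt, add_zero]
    calc dist (s.centerMass w x) c ^ p
        ≤ (∑ i ∈ s, w i)⁻¹ * ∑ i ∈ s, w i * dist (x i) c ^ p :=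
          dist_centerMass_pow_le hw (hτ.trans_le hle) x c p
      _ ≤ τ⁻¹ * ∑ i ∈ s, w i * dist (x i) c ^ p := by gcongr
  · rw [thresholdedMean, if_neg hlt.not_ge, if_pos hlt, dist_zero_left]
    exact le_add_of_nonneg_left (by positivity)

lemma sq_thresholdedMean_sub_le {τ : ℝ} (hτ : 0 < τ) (hw : ∀ i ∈ s, 0 ≤ w i) (x : ι → ℝ) (c : ℝ) :
    (thresholdedMean τ s w x - c) ^ 2 ≤
      1 / τ * ∑ i ∈ s, w i * (x i - c) ^ 2 + c ^ 2 * if ∑ i ∈ s, w i < τ then 1 else 0 := by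
  simpa only [Real.dist_eq, Real.norm_eq_abs, sq_abs, one_div, mul_ite, mul_one, mul_zero] using
    dist_thresholdedMean_pow_le hτ hw x c 2

end ThresholdedMean

theorem pace_deterministic_bound_general {ι m k : Type*} [Fintype ι] [Fintype m] [Fintype k]
    {τ : ℝ} (hτ : 0 < τ) {y : ι → Matrix m k ℝ} (hy : ∀ ℓ i j, 0 ≤ y ℓ i j)
    (Chatl : ι → Matrix m k ℝ) (C : Matrix m k ℝ)
    {N : Matrix m k ℝ} (hN : ∀ i j, N i j = ∑ ℓ, y ℓ i j)
    {Chat : Matrix m k ℝ} (hChat : ∀ i j, Chat i j =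
      (if τ ≤ N i j then 1 else 0) * (∑ ℓ, y ℓ i j * Chatl ℓ i j) / N i j) :
    (1 / ((Fintype.card m : ℝ) * Fintype.card k)) * ∑ i, ∑ j, (Chat i j - C i j) ^ 2
      ≤ (1 / (τ * ((Fintype.card m : ℝ) * Fintype.card k))) *
          ∑ ℓ, ∑ i, ∑ j, y ℓ i j * (Chatl ℓ i j - C i j) ^ 2
        + (1 / ((Fintype.card m : ℝ) * Fintype.card k)) *
          ∑ i, ∑ j, C i j ^ 2 * (if N i j < τ then 1 else 0) := by
  have entry_le (i : m) (j : k) : (Chat i j - C i j) ^ 2 ≤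
      1 / τ * ∑ ℓ, y ℓ i j * (Chatl ℓ i j - C i j) ^ 2
        + C i j ^ 2 * (if N i j < τ then 1 else 0) := by
    rw [hChat, hN, ← thresholdedMean_eq_ite_mul_div]
    exact sq_thresholdedMean_sub_le hτ (fun ℓ _ => hy ℓ i j) _ _
  have sum_swap : ∑ ℓ, ∑ i, ∑ j, y ℓ i j * (Chatl ℓ i j - C i j) ^ 2 =
      ∑ i, ∑ j, ∑ ℓ, y ℓ i j * (Chatl ℓ i j - C i j) ^ 2 := by
    rw [Finset.sum_comm]
    exact Finset.sum_congr rfl fun _ _ => Finset.sum_comm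
  have sum_le : ∑ i, ∑ j, (Chat i j - C i j) ^ 2 ≤
      1 / τ * ∑ ℓ, ∑ i, ∑ j, y ℓ i j * (Chatl ℓ i j - C i j) ^ 2
        + ∑ i, ∑ j, C i j ^ 2 * (if N i j < τ then 1 else 0) := by
    rw [sum_swap]
    simp only [Finset.mul_sum (ι := m), Finset.mul_sum (ι := k), ← Finset.sum_add_distrib]
    exact Finset.sum_le_sum fun i _ => Finset.sum_le_sum fun j _ => entry_le i j
  rw [mul_comm τ, ← one_div_mul_one_div _ τ, mul_assoc, ← mul_add]
  exact mul_le_mul_of_nonneg_left sum_le (by positivity)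

/-- deterministic form of the main PACE error bound: with
N_{ij} = Σ_ℓ y^{(ℓ)}_{ij} and Ĉ_{ij} = 1_{N_{ij} ≥ τ} (Σ_ℓ y^{(ℓ)}_{ij} Ĉ^{(ℓ)}_{ij})/N_{ij},
for C with entries in {0,1} one has
(1/n²)‖Ĉ − C‖_F² ≤ (1/(τn²)) Σ_ℓ Σ_{i,j} y^{(ℓ)}_{ij}(Ĉ^{(ℓ)}_{ij} − C_{ij})²
                     + (1/n²) Σ_{i,j} C_{ij} 1_{N_{ij} < τ}. -/
theorem pace_deterministic_bound {n T : ℕ} (τ : ℝ) (hτ : 0 < τ)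
    (y : Fin T → Matrix (Fin n) (Fin n) ℝ)
    (hy : ∀ ℓ i j, y ℓ i j = 0 ∨ y ℓ i j = 1)
    (Chatl : Fin T → Matrix (Fin n) (Fin n) ℝ)
    (C : Matrix (Fin n) (Fin n) ℝ)
    (hC : ∀ i j, C i j = 0 ∨ C i j = 1)
    (N : Matrix (Fin n) (Fin n) ℝ)
    (hN : ∀ i j, N i j = ∑ ℓ, y ℓ i j)
    (Chat : Matrix (Fin n) (Fin n) ℝ)
    (hChat : ∀ i j, Chat i j =
      (if τ ≤ N i j then 1 else 0) * (∑ ℓ, y ℓ i j * Chatl ℓ i j) / N i j) :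
    (1 / ((n : ℝ))^2) * ∑ i, ∑ j, (Chat i j - C i j)^2
      ≤ (1 / (τ * ((n : ℝ))^2)) * ∑ ℓ, ∑ i, ∑ j, y ℓ i j * (Chatl ℓ i j - C i j)^2
        + (1 / ((n : ℝ))^2) * ∑ i, ∑ j, C i j * (if N i j < τ then 1 else 0) := by
  have hC_sq (i j) : C i j ^ 2 = C i j := by rcases hC i j with h | h <;> simp [h]
  have hy_nonneg (ℓ i j) : 0 ≤ y ℓ i j := by rcases hy ℓ i j with h | h <;> simp [h]
  simpa only [Fintype.card_fin, ← sq, hC_sq] using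
    pace_deterministic_bound_general hτ hy_nonneg Chatl C hN hChat
end

section
/- Let Ĉ be an n×n matrix with entries in [0,1], let C be an n×n matrix with entries in {0,1}, and let 0 < η < 1. Define the thresholded matrix Ĉ_η by (Ĉ_η)_{ij} = 1 if Ĉ_{ij} > η and 0 otherwise. Then δ̃(Ĉ_η, C) ≤ δ̃(Ĉ, C) / min{η², (1−η)²}; in particular, for η = 1/2, δ̃(Ĉ_{1/2}, C) ≤ 4 δ̃(Ĉ, C). -/
open Matrix BigOperators

/-- The entrywise thresholding of a matrix at level η. -/
noncomputable def threshold {n : ℕ} (C : Matrix (Fin n) (Fin n) ℝ) (η : ℝ) :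
    Matrix (Fin n) (Fin n) ℝ :=
  Matrix.of fun i j => if η < C i j then 1 else 0

/-- Rounding `x` at `η` misses `c` only if `η` separates `x` from `c`, and then `x` is at distance
at least `η` (if `c = 0`) or `1 - η` (if `c = 1`) from `c`. -/
lemma min_sq_mul_sq_ite_lt_sub_le {R : Type*} [CommRing R] [LinearOrder R] [IsStrictOrderedRing R]
    {x c η : R} (hc : c = 0 ∨ c = 1) (hη0 : 0 ≤ η) (hη1 : η ≤ 1) :
    min (η ^ 2) ((1 - η) ^ 2) * ((if η < x then 1 else 0) - c) ^ 2 ≤ (x - c) ^ 2 := by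
  rcases hc with rfl | rfl <;> split_ifs with hx
  · have hdist : η ^ 2 ≤ x ^ 2 := pow_le_pow_left₀ hη0 hx.le 2
    simpa using Or.inl hdist
  · simpa using sq_nonneg x
  · simpa using sq_nonneg (x - 1)
  · have hdist : (1 - η) ^ 2 ≤ (x - 1) ^ 2 := by
      rw [sub_sq_comm x 1]
      exact pow_le_pow_left₀ (sub_nonneg.2 hη1) (sub_le_sub_left (not_lt.1 hx) 1) 2
    simpa using Or.inr hdist

lemma mul_deltaTilde_le_deltaTilde {n : ℕ} {A B C D : Matrix (Fin n) (Fin n) ℝ} {k : ℝ}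
    (h : ∀ i j, k * (A i j - B i j) ^ 2 ≤ (C i j - D i j) ^ 2) :
    k * deltaTilde A B ≤ deltaTilde C D := by
  rw [deltaTilde, deltaTilde, mul_left_comm]
  refine mul_le_mul_of_nonneg_left ?_ (by positivity)
  simp only [Finset.mul_sum]
  exact Finset.sum_le_sum fun i _ => Finset.sum_le_sum fun j _ => h i j

theorem deltaTilde_threshold_le_general {n : ℕ} (A C : Matrix (Fin n) (Fin n) ℝ)
    (hC : ∀ i j, C i j = 0 ∨ C i j = 1) {η : ℝ} (hη0 : 0 < η) (hη1 : η < 1) :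
    deltaTilde (threshold A η) C ≤ deltaTilde A C / min (η ^ 2) ((1 - η) ^ 2) := by
  have hmin : 0 < min (η ^ 2) ((1 - η) ^ 2) :=
    lt_min (pow_pos hη0 2) (pow_pos (sub_pos.2 hη1) 2)
  rw [le_div_iff₀' hmin]
  exact mul_deltaTilde_le_deltaTilde fun i j =>
    min_sq_mul_sq_ite_lt_sub_le (hC i j) hη0.le hη1.le

lemma deltaTilde_threshold_half_le {n : ℕ} (A C : Matrix (Fin n) (Fin n) ℝ)
    (hC : ∀ i j, C i j = 0 ∨ C i j = 1) :
    deltaTilde (threshold A (1 / 2)) C ≤ 4 * deltaTilde A C := by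
  have hmin : min ((1 / 2 : ℝ) ^ 2) ((1 - 1 / 2) ^ 2) = 1 / 4 := by norm_num
  calc deltaTilde (threshold A (1 / 2)) C
      ≤ deltaTilde A C / min ((1 / 2) ^ 2) ((1 - 1 / 2) ^ 2) :=
        deltaTilde_threshold_le_general A C hC one_half_pos one_half_lt_one
    _ = 4 * deltaTilde A C := by rw [hmin]; ring

/-- thresholding PACE: δ̃(Ĉ_η, C) ≤ δ̃(Ĉ, C) / min{η², (1−η)²};
in particular, for η = 1/2, δ̃(Ĉ_{1/2}, C) ≤ 4 δ̃(Ĉ, C). -/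
theorem deltaTilde_threshold_le {n : ℕ}
    (Chat C : Matrix (Fin n) (Fin n) ℝ)
    (hChat : ∀ i j, Chat i j ∈ Set.Icc (0:ℝ) 1)
    (hC : ∀ i j, C i j = 0 ∨ C i j = 1)
    (η : ℝ) (hη0 : 0 < η) (hη1 : η < 1) :
    deltaTilde (threshold Chat η) C ≤ deltaTilde Chat C / min (η^2) ((1 - η)^2)
    ∧ deltaTilde (threshold Chat (1/2)) C ≤ 4 * deltaTilde Chat C :=
  ⟨deltaTilde_threshold_le_general Chat C hC hη0 hη1, deltaTilde_threshold_half_le Chat C hC⟩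
end

section
/- Let m ≤ n and let S₁ and S₂ be independent uniform random m-subsets of {1,…,n}. Then P(|S₁ ∩ S₂| ≥ ⌈m²/(2n)⌉) ≥ 1 − exp(−m²/(16n)). -/
open MeasureTheory BigOperators

/-!
Fix a `k`-subset `A` of an `n`-set and let `B` be a uniform random `m`-subset. Expanding
`y ^ #(A ∩ B)` over the subsets of `A` that `B` avoids, with nonnegative coefficients for
`0 ≤ y ≤ 1`, and bounding the probability of avoiding `c` points by the value `(1 - m / n) ^ c` for
sampling with replacement, gives `E[y ^ #(A ∩ B)] ≤ (1 - (1 - y) * m / n) ^ k`. Markov's inequality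
then yields the Chernoff bound for the binomial distribution of mean `k * m / n`, whose rate
function `y * log y + 1 - y` is at least `(1 - y) ^ 2 / 2`. By independence the bound survives
averaging over a random `A`. The constant `1 / 8` comes from `y = 1 / 2`.
-/

section Combinatorics

open Finset

lemma cast_choose_sub_one (n m : ℕ) :
    ((n - 1).choose m : ℝ) = n.choose m * (1 - (m : ℝ) / n) := by
  rcases lt_or_ge n m with h | h
  · rw [Nat.choose_eq_zero_of_lt h, Nat.choose_eq_zero_of_lt (by lia)]
    simp
  rcases n with _ | n
  · simp [Nat.le_zero.1 h]
  · have absorb : (n.choose m : ℝ) * (n + 1) = (n + 1).choose m * (n + 1 - m) := by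
      rw [← Nat.cast_succ, ← Nat.cast_sub h]
      exact_mod_cast Nat.choose_mul_succ_eq n m
    rw [Nat.add_sub_cancel, Nat.cast_succ]
    field_simp
    exact absorb

lemma cast_choose_sub_le_mul_pow (n m c : ℕ) :
    ((n - c).choose m : ℝ) ≤ n.choose m * (1 - (m : ℝ) / n) ^ c := by
  rcases lt_or_ge n m with h | h
  · rw [Nat.choose_eq_zero_of_lt h, Nat.choose_eq_zero_of_lt (by lia)]
    simp
  have hr : 0 ≤ 1 - (m : ℝ) / n :=
    sub_nonneg.2 (div_le_one_of_le₀ (by exact_mod_cast h) n.cast_nonneg)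
  induction c with
  | zero => simp
  | succ c ih =>
    have pred_le : ((n - c - 1).choose m : ℝ) ≤ (n - c).choose m * (1 - (m : ℝ) / n) := by
      rcases Nat.eq_zero_or_pos (n - c) with h0 | hpos
      · rcases m with _ | m <;> simp [h0]
      · rw [cast_choose_sub_one]
        gcongr
        exact n.sub_le c
    calc ((n - (c + 1)).choose m : ℝ)
        ≤ (n - c).choose m * (1 - (m : ℝ) / n) := by rwa [← Nat.sub_sub]
      _ ≤ n.choose m * (1 - (m : ℝ) / n) ^ c * (1 - (m : ℝ) / n) := by gcongr
      _ = n.choose m * (1 - (m : ℝ) / n) ^ (c + 1) := by ring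

variable {α : Type*} [DecidableEq α]

lemma pow_card_inter_eq_sum_filter_disjoint {R : Type*} [CommRing R] (y : R) (A B : Finset α) :
    y ^ #(A ∩ B) = ∑ C ∈ A.powerset with Disjoint C B, (1 - y) ^ #C * y ^ (#A - #C) := by
  have hfilter : {C ∈ A.powerset | Disjoint C B} = (A \ B).powerset := by
    ext C
    simp [subset_sdiff]
  calc y ^ #(A ∩ B)
      = (1 - y + y) ^ #(A \ B) * y ^ #(A ∩ B) := by simp
    _ = ∑ C ∈ (A \ B).powerset, (1 - y) ^ #C * y ^ (#(A \ B) - #C) * y ^ #(A ∩ B) := by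
        rw [← sum_pow_mul_eq_add_pow, sum_mul]
    _ = ∑ C ∈ A.powerset with Disjoint C B, (1 - y) ^ #C * y ^ (#A - #C) := by
        rw [hfilter]
        refine sum_congr rfl fun C hC => ?_
        have hCle : #C ≤ #(A \ B) := card_le_card (mem_powerset.1 hC)
        rw [mul_assoc, ← pow_add, ← card_sdiff_add_card_inter A B, Nat.sub_add_comm hCle]

variable [Fintype α]

lemma card_powersetCard_filter_disjoint (m : ℕ) (C : Finset α) :
    #{B ∈ powersetCard m (univ : Finset α) | Disjoint C B} = (Fintype.card α - #C).choose m := by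
  have hfilter : {B ∈ powersetCard m (univ : Finset α) | Disjoint C B} = powersetCard m Cᶜ := by
    ext B
    simp [mem_powersetCard, subset_compl_iff_disjoint_left, and_comm]
  rw [hfilter, card_powersetCard, card_compl]

lemma sum_powersetCard_pow_card_inter_le (m : ℕ) (A : Finset α) {y : ℝ} (hy₀ : 0 ≤ y)
    (hy₁ : y ≤ 1) :
    ∑ B ∈ powersetCard m univ, y ^ #(A ∩ B) ≤
      (Fintype.card α).choose m * (1 - (1 - y) * (m / Fintype.card α)) ^ #A := by
  have : 0 ≤ 1 - y := sub_nonneg.2 hy₁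
  calc ∑ B ∈ powersetCard m univ, y ^ #(A ∩ B)
      = ∑ C ∈ A.powerset, (1 - y) ^ #C * y ^ (#A - #C) *
          #{B ∈ powersetCard m univ | Disjoint C B} := by
        simp_rw [pow_card_inter_eq_sum_filter_disjoint, sum_filter]
        rw [sum_comm]
        simp_rw [← sum_filter, sum_const, nsmul_eq_mul, mul_comm]
    _ ≤ ∑ C ∈ A.powerset, (1 - y) ^ #C * y ^ (#A - #C) *
          ((Fintype.card α).choose m * (1 - (m : ℝ) / Fintype.card α) ^ #C) := by
        gcongr with C
        rw [card_powersetCard_filter_disjoint]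
        exact cast_choose_sub_le_mul_pow _ _ _
    _ = (Fintype.card α).choose m * ∑ C ∈ A.powerset,
          ((1 - y) * (1 - (m : ℝ) / Fintype.card α)) ^ #C * y ^ (#A - #C) := by
        rw [mul_sum]
        refine sum_congr rfl fun C _ => ?_
        rw [mul_pow]
        ring
    _ = (Fintype.card α).choose m * (1 - (1 - y) * (m / Fintype.card α)) ^ #A := by
        rw [sum_pow_mul_eq_add_pow]
        ring

lemma sum_powersetCard_pow_card_inter_le_exp (m : ℕ) (A : Finset α) {y : ℝ} (hy₀ : 0 ≤ y)
    (hy₁ : y ≤ 1) :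
    ∑ B ∈ powersetCard m univ, y ^ #(A ∩ B) ≤
      (Fintype.card α).choose m * Real.exp (-((1 - y) * (#A * m / Fintype.card α))) := by
  rcases lt_or_ge (Fintype.card α) m with h | h
  · simp [powersetCard_eq_empty.2 (card_univ.trans_lt h), Nat.choose_eq_zero_of_lt h]
  have hp : (m : ℝ) / Fintype.card α ≤ 1 :=
    div_le_one_of_le₀ (by exact_mod_cast h) (Nat.cast_nonneg _)
  have hbase : 0 ≤ 1 - (1 - y) * (m / Fintype.card α) :=
    sub_nonneg.2 (mul_le_one₀ (by linarith) (by positivity) hp)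
  calc ∑ B ∈ powersetCard m univ, y ^ #(A ∩ B)
      ≤ (Fintype.card α).choose m * (1 - (1 - y) * (m / Fintype.card α)) ^ #A :=
        sum_powersetCard_pow_card_inter_le m A hy₀ hy₁
    _ ≤ (Fintype.card α).choose m * Real.exp (-((1 - y) * (m / Fintype.card α))) ^ #A := by
        gcongr
        exact Real.one_sub_le_exp_neg _
    _ = (Fintype.card α).choose m * Real.exp (-((1 - y) * (#A * m / Fintype.card α))) := by
        rw [← Real.exp_nat_mul]
        ring_nf

end Combinatorics

section Chernoff

open Finset InformationTheory

lemma one_sub_sq_div_two_le_klFun {y : ℝ} (hy₀ : 0 ≤ y) (hy₁ : y ≤ 1) :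
    (1 - y) ^ 2 / 2 ≤ klFun y := by
  rcases hy₀.eq_or_lt with rfl | hpos
  · norm_num [klFun]
  have hlog : (y - y⁻¹) / 2 ≤ Real.log y := by
    rw [← Real.sinh_log hpos]
    exact Real.sinh_le_self_iff.2 (Real.log_nonpos hy₀ hy₁)
  calc (1 - y) ^ 2 / 2 = y * ((y - y⁻¹) / 2) + 1 - y := by
        field_simp
        ring
    _ ≤ y * Real.log y + 1 - y := by gcongr

lemma rpow_mul_self_eq_exp {y : ℝ} (hy : 0 ≤ y) (t : ℝ) :
    y ^ (y * t) = Real.exp (t * (y * Real.log y)) := by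
  rcases hy.eq_or_lt with rfl | hpos
  · simp
  · rw [Real.rpow_def_of_pos hpos]
    ring_nf

variable {α : Type*} [DecidableEq α] [Fintype α]

lemma card_filter_card_inter_le_exp_klFun (m : ℕ) (A : Finset α) {y : ℝ} (hy₀ : 0 ≤ y)
    (hy₁ : y ≤ 1) :
    (#{B ∈ powersetCard m univ | (#(A ∩ B) : ℝ) ≤ y * (#A * m / Fintype.card α)} : ℝ) ≤
      (Fintype.card α).choose m * Real.exp (-(#A * m / Fintype.card α * klFun y)) := by
  set t : ℝ := #A * m / Fintype.card α
  have markov : #{B ∈ powersetCard m univ | (#(A ∩ B) : ℝ) ≤ y * t} * y ^ (y * t) ≤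
      ∑ B ∈ powersetCard m univ, y ^ #(A ∩ B) := by
    rw [← nsmul_eq_mul, ← sum_const, sum_filter]
    gcongr with B
    split_ifs with hB
    · rw [← Real.rpow_natCast]
      exact Real.rpow_le_rpow_of_exponent_ge' hy₀ hy₁ (Nat.cast_nonneg _) hB
    · positivity
  rw [rpow_mul_self_eq_exp hy₀, ← le_div_iff₀ (Real.exp_pos _)] at markov
  calc (#{B ∈ powersetCard m univ | (#(A ∩ B) : ℝ) ≤ y * t} : ℝ)
      ≤ (∑ B ∈ powersetCard m univ, y ^ #(A ∩ B)) / Real.exp (t * (y * Real.log y)) := markov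
    _ ≤ (Fintype.card α).choose m * Real.exp (-((1 - y) * t)) /
          Real.exp (t * (y * Real.log y)) := by
        gcongr
        exact sum_powersetCard_pow_card_inter_le_exp m A hy₀ hy₁
    _ = (Fintype.card α).choose m * Real.exp (-(t * klFun y)) := by
        rw [mul_div_assoc, ← Real.exp_sub, klFun]
        ring_nf

lemma card_filter_card_inter_le_exp_sq (m : ℕ) (A : Finset α) {δ : ℝ} (hδ₀ : 0 ≤ δ)
    (hδ₁ : δ ≤ 1) :
    (#{B ∈ powersetCard m univ | (#(A ∩ B) : ℝ) ≤ (1 - δ) * (#A * m / Fintype.card α)} : ℝ) ≤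
      (Fintype.card α).choose m * Real.exp (-(#A * m / Fintype.card α * (δ ^ 2 / 2))) := by
  have hrate : δ ^ 2 / 2 ≤ klFun (1 - δ) := by
    simpa using one_sub_sq_div_two_le_klFun (sub_nonneg.2 hδ₁) (sub_le_self 1 hδ₀)
  refine (card_filter_card_inter_le_exp_klFun m A (sub_nonneg.2 hδ₁) (sub_le_self 1 hδ₀)).trans ?_
  gcongr

end Chernoff

section Probability

open Finset
open scoped ENNReal

variable {Ω : Type*} [MeasurableSpace Ω] (μ : Measure Ω) [IsProbabilityMeasure μ]

lemma measure_setOf_rel_le_of_forall_mem_sum_le {α β : Type*} {X : Ω → α} {Y : Ω → β}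
    {s : Finset α} {t : Finset β}
    (hXmeas : ∀ a, NullMeasurableSet {ω | X ω = a} μ) (hX : ∀ ω, X ω ∈ s) (hY : ∀ ω, Y ω ∈ t)
    (hindep : ∀ a b, μ {ω | X ω = a ∧ Y ω = b} = μ {ω | X ω = a} * μ {ω | Y ω = b})
    (r : α → β → Prop) [∀ a, DecidablePred (r a)] {c : ℝ≥0∞}
    (hc : ∀ a ∈ s, ∑ b ∈ t with r a b, μ {ω | Y ω = b} ≤ c) :
    μ {ω | r (X ω) (Y ω)} ≤ c := by
  have hcover : {ω | r (X ω) (Y ω)} ⊆ ⋃ a ∈ s, ⋃ b ∈ t.filter (r a), {ω | X ω = a ∧ Y ω = b} := by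
    intro ω hω
    simp only [Set.mem_iUnion]
    exact ⟨X ω, hX ω, Y ω, mem_filter.2 ⟨hY ω, hω⟩, rfl, rfl⟩
  have hdisj : Pairwise fun a a' => Disjoint {ω | X ω = a} {ω | X ω = a'} :=
    fun a a' hne => Set.disjoint_left.2 fun ω ha ha' => hne (ha.symm.trans ha')
  have htotal : ∑ a ∈ s, μ {ω | X ω = a} ≤ 1 :=
    (sum_measure_le_measure_univ (fun a _ => hXmeas a)
      fun a _ a' _ hne => (hdisj hne).aedisjoint).trans_eq measure_univ
  calc μ {ω | r (X ω) (Y ω)}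
      ≤ ∑ a ∈ s, ∑ b ∈ t with r a b, μ {ω | X ω = a ∧ Y ω = b} :=
        (measure_mono hcover).trans <| (measure_biUnion_finset_le _ _).trans <|
          sum_le_sum fun a _ => measure_biUnion_finset_le _ _
    _ = ∑ a ∈ s, μ {ω | X ω = a} * ∑ b ∈ t with r a b, μ {ω | Y ω = b} := by
        simp_rw [hindep, mul_sum]
    _ ≤ ∑ a ∈ s, μ {ω | X ω = a} * c := by
        gcongr with a ha
        exact hc a ha
    _ ≤ c := by
        rw [← sum_mul]
        exact mul_le_of_le_one_left' htotal

variable {α : Type*} [DecidableEq α] [Fintype α] {k m : ℕ} {S₁ S₂ : Ω → Finset α}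

lemma measureReal_card_inter_le_le_exp
    (hmeas₁ : ∀ A : Finset α, NullMeasurableSet {ω | S₁ ω = A} μ)
    (hcard₁ : ∀ ω, #(S₁ ω) = k) (hcard₂ : ∀ ω, #(S₂ ω) = m)
    (hunif₂ : ∀ B : Finset α, #B = m → μ {ω | S₂ ω = B} = 1 / ((Fintype.card α).choose m))
    (hindep : ∀ A B : Finset α,
      μ {ω | S₁ ω = A ∧ S₂ ω = B} = μ {ω | S₁ ω = A} * μ {ω | S₂ ω = B})
    {δ : ℝ} (hδ₀ : 0 ≤ δ) (hδ₁ : δ ≤ 1) :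
    μ.real {ω | (#(S₁ ω ∩ S₂ ω) : ℝ) ≤ (1 - δ) * (k * m / Fintype.card α)} ≤
      Real.exp (-(k * m / Fintype.card α * (δ ^ 2 / 2))) := by
  refine ENNReal.toReal_le_of_le_ofReal (Real.exp_nonneg _) ?_
  refine measure_setOf_rel_le_of_forall_mem_sum_le μ (s := powersetCard k univ)
    (t := powersetCard m univ) hmeas₁ (by simp [hcard₁]) (by simp [hcard₂]) hindep
    (fun A B => (#(A ∩ B) : ℝ) ≤ (1 - δ) * (k * m / Fintype.card α)) fun A hA => ?_
  obtain rfl : #A = k := (mem_powersetCard.1 hA).2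
  rw [sum_congr rfl fun B hB => hunif₂ B (mem_powersetCard.1 (mem_filter.1 hB).1).2,
    sum_const, nsmul_eq_mul, mul_one_div]
  refine ENNReal.div_le_of_le_mul' ?_
  rw [← ENNReal.ofReal_natCast, ← ENNReal.ofReal_natCast, ← ENNReal.ofReal_mul (Nat.cast_nonneg _)]
  exact ENNReal.ofReal_le_ofReal (card_filter_card_inter_le_exp_sq m A hδ₀ hδ₁)

theorem overlap_lower_bound_general
    (hmeas₁ : ∀ A : Finset α, NullMeasurableSet {ω | S₁ ω = A} μ)
    (hcard₁ : ∀ ω, #(S₁ ω) = k) (hcard₂ : ∀ ω, #(S₂ ω) = m)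
    (hunif₂ : ∀ B : Finset α, #B = m → μ {ω | S₂ ω = B} = 1 / ((Fintype.card α).choose m))
    (hindep : ∀ A B : Finset α,
      μ {ω | S₁ ω = A ∧ S₂ ω = B} = μ {ω | S₁ ω = A} * μ {ω | S₂ ω = B}) :
    1 - Real.exp (-(k * m / (8 * Fintype.card α))) ≤
      μ.real {ω | ⌈(k * m : ℝ) / (2 * Fintype.card α)⌉₊ ≤ #(S₁ ω ∩ S₂ ω)} := by
  have htail := measureReal_card_inter_le_le_exp μ hmeas₁ hcard₁ hcard₂ hunif₂ hindep
    (δ := 1 / 2) (by norm_num) (by norm_num)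
  rw [show (k * m / Fintype.card α * ((1 / 2) ^ 2 / 2) : ℝ) = k * m / (8 * Fintype.card α) by ring,
    show ((1 - 1 / 2) * (k * m / Fintype.card α) : ℝ) = k * m / (2 * Fintype.card α) by ring]
    at htail
  set τ : ℝ := k * m / (2 * Fintype.card α)
  have hunion : {ω | ⌈τ⌉₊ ≤ #(S₁ ω ∩ S₂ ω)} ∪ {ω | (#(S₁ ω ∩ S₂ ω) : ℝ) ≤ τ} = Set.univ :=
    Set.eq_univ_of_forall fun ω => (le_total τ _).imp Nat.ceil_le.2 id
  have hsplit := measureReal_union_le (μ := μ) {ω | ⌈τ⌉₊ ≤ #(S₁ ω ∩ S₂ ω)}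
    {ω | (#(S₁ ω ∩ S₂ ω) : ℝ) ≤ τ}
  rw [hunion, probReal_univ] at hsplit
  linarith

end Probability

/-- overlap of two independent uniform random m-subsets: for independent
uniform random m-subsets S₁, S₂ of {1,…,n},
P(|S₁ ∩ S₂| ≥ ⌈m²/(2n)⌉) ≥ 1 − exp(−m²/(16n)). -/
theorem overlap_lower_bound {n m : ℕ} (hmn : m ≤ n)
    {Ω : Type*} [MeasurableSpace Ω] (μ : Measure Ω) [IsProbabilityMeasure μ]
    (S₁ S₂ : Ω → Finset (Fin n))
    (hmeas₁ : ∀ A : Finset (Fin n), MeasurableSet {ω | S₁ ω = A})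
    (hmeas₂ : ∀ A : Finset (Fin n), MeasurableSet {ω | S₂ ω = A})
    (hcard₁ : ∀ ω, (S₁ ω).card = m)
    (hcard₂ : ∀ ω, (S₂ ω).card = m)
    (hunif₁ : ∀ A : Finset (Fin n), A.card = m → μ {ω | S₁ ω = A} = 1 / (n.choose m))
    (hunif₂ : ∀ A : Finset (Fin n), A.card = m → μ {ω | S₂ ω = A} = 1 / (n.choose m))
    (hindep : ∀ A B : Finset (Fin n),
      μ {ω | S₁ ω = A ∧ S₂ ω = B} = μ {ω | S₁ ω = A} * μ {ω | S₂ ω = B}) :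
    1 - Real.exp (-((m : ℝ)^2) / (16 * n))
      ≤ (μ {ω | ⌈((m : ℝ)^2) / (2 * n)⌉₊ ≤ (S₁ ω ∩ S₂ ω).card}).toReal := by
  have h := overlap_lower_bound_general μ (fun A => (hmeas₁ A).nullMeasurableSet) hcard₁ hcard₂
    (by simpa only [Fintype.card_fin] using hunif₂) hindep
  rw [Fintype.card_fin, ← sq] at h
  refine (sub_le_sub_left (Real.exp_le_exp.2 ?_) 1).trans h
  rw [neg_div, neg_le_neg_iff, ← div_div, ← div_div]
  gcongr
  norm_num
end

section
/- Let m ≤ n and let S_a, S_b, S_c be three mutually independent uniform random m-subsets of {1,…,n}. Then the random variables Y_{ab} = |S_a ∩ S_b| and Y_{ac} = |S_a ∩ S_c| are independent. -/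
open MeasureTheory ProbabilityTheory BigOperators

/-!
Reveal the common subset `Sa` first. Since the law of `Sb` is invariant under permutations of the
ground set, and these act transitively on the subsets of a given size, the conditional law of
`#(Sa ∩ Sb)` given `Sa` depends only on `#Sa`, which is constant; likewise for `Sc`. Given `Sa`, the
two overlaps are independent with laws that do not depend on `Sa`, so they are independent outright.
-/

open Function
open scoped Finset Pointwise

section JointLaw

variable {Ω α β γ δ ε : Type*} [MeasurableSpace Ω] [MeasurableSpace α] [MeasurableSpace β]
  [MeasurableSpace γ] [MeasurableSpace δ] [MeasurableSpace ε] {μ : Measure Ω}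
  {X : Ω → α} {Y : Ω → β} {Z : Ω → γ}

theorem hasLaw_prod_map_of_measure_eq_mul [SFinite μ] [Countable α] [Countable β] [Countable γ]
    [MeasurableSingletonClass α] [MeasurableSingletonClass β] [MeasurableSingletonClass γ]
    (hX : AEMeasurable X μ) (hY : AEMeasurable Y μ) (hZ : AEMeasurable Z μ)
    (h : ∀ a b c, μ {ω | X ω = a ∧ Y ω = b ∧ Z ω = c} =
      μ {ω | X ω = a} * μ {ω | Y ω = b} * μ {ω | Z ω = c}) :
    HasLaw (fun ω => (X ω, Y ω, Z ω)) ((μ.map X).prod ((μ.map Y).prod (μ.map Z))) μ where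
  aemeasurable := hX.prodMk (hY.prodMk hZ)
  map_eq := by
    refine Measure.ext_of_singleton fun ⟨a, b, c⟩ => ?_
    have hpre : (fun ω => (X ω, Y ω, Z ω)) ⁻¹' {(a, b, c)} =
        {ω | X ω = a ∧ Y ω = b ∧ Z ω = c} := by
      ext; simp
    rw [Measure.map_apply_of_aemeasurable (hX.prodMk (hY.prodMk hZ)) (.singleton _), hpre, h,
      ← Set.singleton_prod_singleton, ← Set.singleton_prod_singleton, Measure.prod_prod,
      Measure.prod_prod, Measure.map_apply_of_aemeasurable hX (.singleton _),
      Measure.map_apply_of_aemeasurable hY (.singleton _),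
      Measure.map_apply_of_aemeasurable hZ (.singleton _), mul_assoc]
    rfl

theorem indepFun_of_hasLaw_prod {κ : Measure α} {ν : Measure β} [IsProbabilityMeasure κ]
    [IsProbabilityMeasure ν] (h : HasLaw (fun ω => (X ω, Y ω)) (κ.prod ν) μ) :
    IndepFun X Y μ := by
  have : IsProbabilityMeasure μ := h.isProbabilityMeasure
  exact (indepFun_iff_hasLaw_prodMk_prod (measurePreserving_fst.fun_comp_hasLaw h)
    (measurePreserving_snd.fun_comp_hasLaw h)).2 h

/-- Here `η.map (f a)` is the conditional law of `f X Y` given `X = a`, and likewise for `g`. -/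
theorem indepFun_of_ae_map_eq {κ : Measure α} {η : Measure β} {θ : Measure γ} {ν : Measure δ}
    {ρ : Measure ε} [IsProbabilityMeasure κ] [IsProbabilityMeasure η] [IsProbabilityMeasure θ]
    {f : α → β → δ} {g : α → γ → ε}
    (hf : Measurable (uncurry f)) (hg : Measurable (uncurry g))
    (hXYZ : HasLaw (fun ω => (X ω, Y ω, Z ω)) (κ.prod (η.prod θ)) μ)
    (hν : ∀ᵐ a ∂κ, η.map (f a) = ν) (hρ : ∀ᵐ a ∂κ, θ.map (g a) = ρ) :
    IndepFun (fun ω => f (X ω) (Y ω)) (fun ω => g (X ω) (Z ω)) μ := by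
  obtain ⟨a₀, rfl, rfl⟩ := (hν.and hρ).exists
  have := Measure.isProbabilityMeasure_map (μ := η) (hf.of_uncurry_left (x := a₀)).aemeasurable
  have := Measure.isProbabilityMeasure_map (μ := θ) (hg.of_uncurry_left (x := a₀)).aemeasurable
  have hfg : Measurable (uncurry fun (a : α) (p : β × γ) => (f a p.1, g a p.2)) := by
    fun_prop
  have hsection : ∀ᵐ a ∂κ, (η.prod θ).map (fun p => (f a p.1, g a p.2)) =
      (η.map (f a₀)).prod (θ.map (g a₀)) := by
    filter_upwards [hν, hρ] with a hνa hρa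
    rw [← hνa, ← hρa]
    exact (Measure.map_prod_map η θ hf.of_uncurry_left hg.of_uncurry_left).symm
  have hskew := (MeasurePreserving.id κ).skew_product hfg hsection
  exact indepFun_of_hasLaw_prod ((measurePreserving_snd.comp hskew).fun_comp_hasLaw hXYZ)

end JointLaw

section RandomFinset

variable {Ω α : Type*} [MeasurableSpace Ω] [DecidableEq α] {μ : Measure Ω} {S : Ω → Finset α}

/-- A random finite subset is exchangeable if its law is invariant under all permutations of the
ground set, acting on finite subsets pointwise. -/
def IsExchangeable (S : Ω → Finset α) (μ : Measure Ω) : Prop :=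
  ∀ σ : Equiv.Perm α, IdentDistrib (fun ω => σ • S ω) S μ μ

theorem isExchangeable_of_measure_eq_const [Countable α] {m : ℕ} {c : ENNReal}
    (hS : AEMeasurable S μ) (hcard : ∀ᵐ ω ∂μ, #(S ω) = m)
    (hconst : ∀ A : Finset α, #A = m → μ {ω | S ω = A} = c) : IsExchangeable S μ := by
  intro σ
  have hσS : AEMeasurable (fun ω => σ • S ω) μ := Measurable.of_discrete.comp_aemeasurable hS
  refine ⟨hσS, hS, Measure.ext_of_singleton fun A => ?_⟩
  have hpre : (fun ω => σ • S ω) ⁻¹' {A} = {ω | S ω = σ⁻¹ • A} := by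
    ext; simp [eq_inv_smul_iff]
  rw [Measure.map_apply_of_aemeasurable hσS (.singleton A),
    Measure.map_apply_of_aemeasurable hS (.singleton A), hpre]
  change _ = μ {ω | S ω = A}
  by_cases hA : #A = m
  · rw [hconst A hA, hconst _ ((Finset.card_smul_finset _ A).trans hA)]
  · have hnull (B : Finset α) (hB : #B ≠ m) : μ {ω | S ω = B} = 0 :=
      measure_mono_null (fun ω hω => by simpa [hω.symm] using hB) hcard
    rw [hnull A hA, hnull _ (by rwa [Finset.card_smul_finset])]

theorem exists_perm_smul_eq_of_card_eq {A B : Finset α} (h : #A = #B) :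
    ∃ σ : Equiv.Perm α, σ • A = B := by
  have := Set.powersetCard.isPretransitive (α := α) (n := #B)
  obtain ⟨σ, hσ⟩ := MulAction.exists_smul_eq (Equiv.Perm α)
    (⟨A, h⟩ : Set.powersetCard α #B) ⟨B, rfl⟩
  exact ⟨σ, congrArg Subtype.val hσ⟩

theorem IsExchangeable.map_card_inter_eq [Countable α] (hS : IsExchangeable S μ) {A B : Finset α}
    (h : #A = #B) : (μ.map S).map (fun T => #(A ∩ T)) = (μ.map S).map (fun T => #(B ∩ T)) := by
  obtain ⟨σ, rfl⟩ := exists_perm_smul_eq_of_card_eq h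
  have hcard (T : Finset α) : #(σ • A ∩ σ • T) = #(A ∩ T) := by
    rw [← Finset.smul_finset_inter, Finset.card_smul_finset]
  nth_rw 2 [← (hS σ).map_eq]
  rw [AEMeasurable.map_map_of_aemeasurable (by fun_prop) (hS σ).aemeasurable_fst,
    AEMeasurable.map_map_of_aemeasurable (by fun_prop) (hS σ).aemeasurable_snd]
  simp only [comp_def, hcard]

end RandomFinset

theorem overlap_indep_general {Ω α : Type*} [MeasurableSpace Ω] [Countable α] [DecidableEq α]
    {μ : Measure Ω} [IsProbabilityMeasure μ] {Sa Sb Sc : Ω → Finset α} {m : ℕ}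
    (hSa : AEMeasurable Sa μ) (hcarda : ∀ᵐ ω ∂μ, #(Sa ω) = m)
    (hSb : IsExchangeable Sb μ) (hSc : IsExchangeable Sc μ)
    (hindep : ∀ A B C : Finset α, μ {ω | Sa ω = A ∧ Sb ω = B ∧ Sc ω = C} =
      μ {ω | Sa ω = A} * μ {ω | Sb ω = B} * μ {ω | Sc ω = C}) :
    IndepFun (fun ω => #(Sa ω ∩ Sb ω)) (fun ω => #(Sa ω ∩ Sc ω)) μ := by
  have hmeasb := (hSb 1).aemeasurable_snd
  have hmeasc := (hSc 1).aemeasurable_snd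
  have := Measure.isProbabilityMeasure_map hSa
  have := Measure.isProbabilityMeasure_map hmeasb
  have := Measure.isProbabilityMeasure_map hmeasc
  obtain ⟨ω₀, hω₀⟩ := hcarda.exists
  have hcard : ∀ᵐ A ∂μ.map Sa, #A = #(Sa ω₀) := by
    rw [ae_map_iff hSa .of_discrete]
    simpa only [hω₀] using hcarda
  exact indepFun_of_ae_map_eq (f := fun A B => #(A ∩ B)) (g := fun A C => #(A ∩ C))
    .of_discrete .of_discrete (hasLaw_prod_map_of_measure_eq_mul hSa hmeasb hmeasc hindep)
    (hcard.mono fun _ hA => hSb.map_card_inter_eq hA)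
    (hcard.mono fun _ hA => hSc.map_card_inter_eq hA)

/-- independence of overlaps sharing a common subset: if S_a, S_b, S_c are
mutually independent uniform random m-subsets of {1,…,n}, then Y_ab = |S_a ∩ S_b| and
Y_ac = |S_a ∩ S_c| are independent. -/
theorem overlap_indep {n m : ℕ} (hmn : m ≤ n)
    {Ω : Type*} [MeasurableSpace Ω] (μ : Measure Ω) [IsProbabilityMeasure μ]
    (Sa Sb Sc : Ω → Finset (Fin n))
    (hmeasa : ∀ A : Finset (Fin n), MeasurableSet {ω | Sa ω = A})
    (hmeasb : ∀ A : Finset (Fin n), MeasurableSet {ω | Sb ω = A})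
    (hmeasc : ∀ A : Finset (Fin n), MeasurableSet {ω | Sc ω = A})
    (hcarda : ∀ ω, (Sa ω).card = m)
    (hcardb : ∀ ω, (Sb ω).card = m)
    (hcardc : ∀ ω, (Sc ω).card = m)
    (hunifa : ∀ A : Finset (Fin n), A.card = m → μ {ω | Sa ω = A} = 1 / (n.choose m))
    (hunifb : ∀ A : Finset (Fin n), A.card = m → μ {ω | Sb ω = A} = 1 / (n.choose m))
    (hunifc : ∀ A : Finset (Fin n), A.card = m → μ {ω | Sc ω = A} = 1 / (n.choose m))
    -- mutual independence of the three subsets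
    (hindep : ∀ A B C : Finset (Fin n),
      μ {ω | Sa ω = A ∧ Sb ω = B ∧ Sc ω = C}
        = μ {ω | Sa ω = A} * μ {ω | Sb ω = B} * μ {ω | Sc ω = C}) :
    IndepFun (fun ω => (Sa ω ∩ Sb ω).card) (fun ω => (Sa ω ∩ Sc ω).card) μ := by
  have hSb := isExchangeable_of_measure_eq_const (measurable_to_countable' hmeasb).aemeasurable
    (.of_forall hcardb) hunifb
  have hSc := isExchangeable_of_measure_eq_const (measurable_to_countable' hmeasc).aemeasurable
    (.of_forall hcardc) hunifc
  exact overlap_indep_general (measurable_to_countable' hmeasa).aemeasurable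
    (.of_forall hcarda) hSb hSc hindep
end
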